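/- arXiv:2207.07485 — 2 statements merged into one kernel-verified Lean document; each statement's English description precedes it below -/
import Mathlib

section
/- Let D be the infinitesimal generator of a strongly continuous one-parameter group of isometries of a complex Banach space B, and let σ > 0. A vector f ∈ D^∞(D) belongs to B_σ(D) if and only if the quantity sup_{k∈ℕ} σ^{−k} ‖D^k f‖ is finite. -/
/-!
The nontrivial direction is Bernstein's inequality: if `‖c k‖ ≤ R * σ ^ k` for all `k`, with `R`
arbitrary, then `‖c 1‖ ≤ σ * ‖c 0‖`. Applied to each shifted chain `c (k + ·)` it gives the result
by induction.

Testing `T x (c k)` against a real functional of norm at most one reduces the inequality to scalar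
functions `u k : ℝ → ℝ` with `(u k)' = u (k + 1)`, `|u k| ≤ R * σ ^ k` and `|u 0| ≤ 1`, for which
`u 1 0 ≤ σ` is needed (`scalar_bernstein`). Replacing `u 0` by its odd part, its Taylor series
defines an odd entire function `G` of exponential type `σ` that has values in `[-1, 1]` on the
real line and purely imaginary values `G (I * y) = I * s y` on the imaginary axis.

For the Chebyshev polynomial `T_n` the function `T_n ∘ G` is again bounded by one on the real line,
and it has exponential type `n * σ`, so the Phragmén–Lindelöf principle gives
`|T_n (G (I * y))| ≤ exp (n * σ * y)` for `y ≥ 0` (`norm_chebyshev_comp_le`). On the other hand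
`|T_n (I * sinh t)| ≥ sinh (n * t)`. Letting `n → ∞` absorbs all multiplicative constants and yields
`s y ≤ sinh (σ * y)` (`le_sinh_of_chebyshev`); dividing by `y` and letting `y → 0⁺` gives
`G' 0 ≤ σ`.
-/

open MeasureTheory Filter Topology

noncomputable section

/-- `g` is the value at `f` of the infinitesimal generator of the
strongly continuous one-parameter group `T`. -/
def GenDeriv {E : Type*} [NormedAddCommGroup E] [NormedSpace ℂ E]
    (T : ℝ → E →L[ℂ] E) (f g : E) : Prop :=
  Filter.Tendsto (fun t : ℝ => t⁻¹ • (T t f - f)) (𝓝[≠] (0 : ℝ)) (𝓝 g)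

/-- The Favard constants `K_j = (4/π) Σ_{r≥0} (-1)^{r(j+1)}/(2r+1)^{j+1}`. -/
def favard (j : ℕ) : ℝ :=
  (4 / Real.pi) * ∑' r : ℕ, (-1 : ℝ) ^ (r * (j + 1)) / (2 * (r : ℝ) + 1) ^ (j + 1)

/-! ### Taylor expansion -/

/-- Taylor's theorem for a chain of successive derivatives, obtained by integrating the bound on
the highest derivative `n` times. -/
lemma taylor_remainder_le {v : ℕ → ℝ → ℝ} {R σ : ℝ}
    (hv : ∀ k x, HasDerivAt (v k) (v (k + 1) x) x) (hb : ∀ k x, |v k x| ≤ R * σ ^ k) (n : ℕ) :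
    ∀ (k : ℕ) (x : ℝ), 0 ≤ x →
      ‖v k x - ∑ j ∈ Finset.range n, v (k + j) 0 * (x ^ j / (j.factorial : ℝ))‖
        ≤ R * σ ^ (k + n) * (x ^ n / (n.factorial : ℝ)) := by
  have hpow : ∀ (j : ℕ) (x : ℝ),
      HasDerivAt (fun x : ℝ => x ^ (j + 1) / ((j + 1).factorial : ℝ))
        (x ^ j / (j.factorial : ℝ)) x := by
    intro j x
    refine ((hasDerivAt_pow (j + 1) x).div_const _).congr_deriv ?_
    rw [Nat.factorial_succ]
    have : (j.factorial : ℝ) ≠ 0 := by positivity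
    have : ((j : ℝ) + 1) ≠ 0 := by positivity
    push_cast
    field_simp
  induction n with
  | zero => intro k x _; simpa using hb k x
  | succ n ih =>
    intro k x hx
    have hd : ∀ x, HasDerivAt
        (fun x => v k x - ∑ j ∈ Finset.range (n + 1), v (k + j) 0 * (x ^ j / (j.factorial : ℝ)))
        (v (k + 1) x - ∑ j ∈ Finset.range n, v (k + 1 + j) 0 * (x ^ j / (j.factorial : ℝ))) x := by
      intro x
      simp only [Finset.sum_range_succ']
      refine (hv k x).sub ?_
      have h1 : HasDerivAt
          (fun x : ℝ => ∑ j ∈ Finset.range n,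
            v (k + (j + 1)) 0 * (x ^ (j + 1) / ((j + 1).factorial : ℝ)))
          (∑ j ∈ Finset.range n, v (k + (j + 1)) 0 * (x ^ j / (j.factorial : ℝ))) x :=
        HasDerivAt.fun_sum fun j _ => (hpow j x).const_mul _
      have h2 := h1.add_const (v (k + 0) 0 * (1 / ((0).factorial : ℝ)))
      refine (h2.congr_deriv ?_).congr_of_eventuallyEq ?_
      · refine Finset.sum_congr rfl fun j _ => ?_
        rw [show k + (j + 1) = k + 1 + j by ring]
      · exact Filter.Eventually.of_forall fun x => by simp
    refine image_norm_le_of_norm_deriv_right_le_deriv_boundary (a := 0) (b := x)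
      (fun y _ => (hd y).continuousAt.continuousWithinAt)
      (fun y _ => (hd y).hasDerivWithinAt)
      (B := fun x => R * σ ^ (k + (n + 1)) * (x ^ (n + 1) / ((n + 1).factorial : ℝ)))
      ?_ (fun y => (hpow n y).const_mul _) ?_ ⟨hx, le_rfl⟩
    · simp [Finset.sum_range_succ']
    · intro y hy
      have := ih (k + 1) y hy.1
      rwa [show k + 1 + n = k + (n + 1) by ring] at this

lemma hasSum_taylor {v : ℕ → ℝ → ℝ} {R σ : ℝ}
    (hv : ∀ k x, HasDerivAt (v k) (v (k + 1) x) x) (hb : ∀ k x, |v k x| ≤ R * σ ^ k)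
    {x : ℝ} (hx : 0 ≤ x) :
    Tendsto (fun n => ∑ j ∈ Finset.range n, v j 0 * (x ^ j / (j.factorial : ℝ))) atTop
      (𝓝 (v 0 x)) := by
  have h0 : Tendsto (fun n : ℕ => R * ((σ * x) ^ n / (n.factorial : ℝ))) atTop (𝓝 0) := by
    simpa using (FloorSemiring.tendsto_pow_div_factorial_atTop (σ * x)).const_mul R
  rw [tendsto_iff_norm_sub_tendsto_zero]
  refine squeeze_zero (fun _ => norm_nonneg _) (fun n => ?_) h0
  have := taylor_remainder_le hv hb n 0 x hx
  rw [norm_sub_rev]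
  simp only [Nat.zero_add] at this
  refine this.trans (le_of_eq ?_)
  rw [mul_pow]; ring

/-! ### The entire extension -/

/-- The entire function with Taylor coefficients `a k / k!` at the origin. -/
def entireExt (a : ℕ → ℝ) (z : ℂ) : ℂ := ∑' k : ℕ, (a k : ℂ) * (z ^ k / (k.factorial : ℂ))

lemma norm_term_le {a : ℕ → ℝ} {R σ : ℝ} (ha : ∀ k, |a k| ≤ R * σ ^ k) {z : ℂ} {r : ℝ}
    (hz : ‖z‖ ≤ r) (k : ℕ) :
    ‖(a k : ℂ) * (z ^ k / (k.factorial : ℂ))‖ ≤ R * ((σ * r) ^ k / (k.factorial : ℝ)) := by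
  rw [norm_mul, norm_div, norm_pow, Complex.norm_real, Real.norm_eq_abs, Complex.norm_natCast,
    mul_pow]
  have h1 : ‖z‖ ^ k / (k.factorial : ℝ) ≤ r ^ k / (k.factorial : ℝ) := by gcongr
  calc |a k| * (‖z‖ ^ k / (k.factorial : ℝ)) ≤ (R * σ ^ k) * (r ^ k / (k.factorial : ℝ)) :=
        mul_le_mul (ha k) h1 (by positivity) ((abs_nonneg _).trans (ha k))
    _ = _ := by ring

lemma summable_majorant (R t : ℝ) : Summable fun k : ℕ => R * (t ^ k / (k.factorial : ℝ)) :=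
  (Real.summable_pow_div_factorial t).mul_left R

lemma differentiable_entireExt {a : ℕ → ℝ} {R σ : ℝ} (ha : ∀ k, |a k| ≤ R * σ ^ k) :
    Differentiable ℂ (entireExt a) := by
  intro z
  have h : DifferentiableOn ℂ (entireExt a) (Metric.ball 0 (‖z‖ + 1)) := by
    refine Complex.differentiableOn_tsum_of_summable_norm
      (summable_majorant R (σ * (‖z‖ + 1))) (fun k => by fun_prop) Metric.isOpen_ball ?_
    intro k w hw
    exact norm_term_le ha (by simpa using (mem_ball_zero_iff.1 hw).le) k
  exact h.differentiableAt (Metric.isOpen_ball.mem_nhds (by simp))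

lemma norm_entireExt_le {a : ℕ → ℝ} {R σ : ℝ} (ha : ∀ k, |a k| ≤ R * σ ^ k) (z : ℂ) :
    ‖entireExt a z‖ ≤ R * Real.exp (σ * ‖z‖) := by
  have h := tsum_of_norm_bounded (summable_majorant R (σ * ‖z‖)).hasSum
    (norm_term_le ha (le_refl ‖z‖))
  rwa [tsum_mul_left, ← congrFun NormedSpace.exp_eq_tsum_div (σ * ‖z‖), ← Real.exp_eq_exp_ℝ] at h

lemma entireExt_ofReal {v : ℕ → ℝ → ℝ} {R σ : ℝ}
    (hv : ∀ k x, HasDerivAt (v k) (v (k + 1) x) x) (hb : ∀ k x, |v k x| ≤ R * σ ^ k)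
    {x : ℝ} (hx : 0 ≤ x) : entireExt (fun k => v k 0) x = (v 0 x : ℂ) := by
  have hs : Summable fun k : ℕ => ((v k 0 : ℝ) : ℂ) * ((x : ℂ) ^ k / (k.factorial : ℂ)) :=
    Summable.of_norm_bounded (summable_majorant R (σ * ‖(x : ℂ)‖))
      (norm_term_le (fun k => hb k 0) le_rfl)
  refine tendsto_nhds_unique hs.hasSum.tendsto_sum_nat ?_
  have := (Complex.continuous_ofReal.tendsto _).comp (hasSum_taylor hv hb hx)
  refine this.congr fun n => ?_
  simp

lemma entireExt_neg {a : ℕ → ℝ} (ha : ∀ k, Even k → a k = 0) (z : ℂ) :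
    entireExt a (-z) = - entireExt a z := by
  rw [entireExt, entireExt, ← tsum_neg]
  refine tsum_congr fun k => ?_
  rcases Nat.even_or_odd k with hk | hk
  · simp [ha k hk]
  · rw [hk.neg_pow]; ring

/-- An odd power series with real coefficients is purely imaginary on the imaginary axis. -/
lemma entireExt_imag {a : ℕ → ℝ} (ha : ∀ k, Even k → a k = 0) (y : ℝ) :
    ∃ s : ℝ, entireExt a (Complex.I * y) = Complex.I * s := by
  refine ⟨∑' k : ℕ, a k * ((-1) ^ (k / 2) * y ^ k / (k.factorial : ℝ)), ?_⟩
  rw [entireExt, Complex.ofReal_tsum, ← tsum_mul_left]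
  refine tsum_congr fun k => ?_
  rcases Nat.even_or_odd k with hk | ⟨m, rfl⟩
  · simp [ha k hk]
  · have : (2 * m + 1) / 2 = m := by omega
    rw [this, mul_pow, pow_succ Complex.I, pow_mul, Complex.I_sq]
    push_cast
    ring

/-! ### Chebyshev polynomials in the complex plane -/

lemma sinh_abs_im_le_norm_cos (θ : ℂ) : Real.sinh |θ.im| ≤ ‖Complex.cos θ‖ := by
  have h1 : ‖Complex.exp (θ * Complex.I)‖ = Real.exp (-θ.im) := by
    rw [Complex.norm_exp]; simp
  have h2 : ‖Complex.exp (-θ * Complex.I)‖ = Real.exp θ.im := by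
    rw [Complex.norm_exp]; simp
  have h3 := abs_norm_sub_norm_le (Complex.exp (θ * Complex.I)) (-Complex.exp (-θ * Complex.I))
  rw [norm_neg, h1, h2, sub_neg_eq_add] at h3
  rw [← Real.abs_sinh, Real.sinh_eq, Complex.cos, norm_div, Complex.norm_two, abs_div, abs_two,
    abs_sub_comm]
  gcongr

lemma norm_cos_le (θ : ℂ) : ‖Complex.cos θ‖ ≤ Real.exp |θ.im| := by
  have h1 : ‖Complex.exp (θ * Complex.I)‖ = Real.exp (-θ.im) := by
    rw [Complex.norm_exp]; simp
  have h2 : ‖Complex.exp (-θ * Complex.I)‖ = Real.exp θ.im := by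
    rw [Complex.norm_exp]; simp
  have h3 := norm_add_le (Complex.exp (θ * Complex.I)) (Complex.exp (-θ * Complex.I))
  rw [h1, h2] at h3
  have h4 : Real.exp (-θ.im) ≤ Real.exp |θ.im| := Real.exp_le_exp.2 (neg_le_abs _)
  have h5 : Real.exp θ.im ≤ Real.exp |θ.im| := Real.exp_le_exp.2 (le_abs_self _)
  rw [Complex.cos, norm_div, Complex.norm_two]
  linarith

/-- A growth bound for `T_n`, obtained by writing `w = cos θ`: then `T_n w = cos (n * θ)` and
`exp |Im θ| ≤ 2 * |cos θ| + 1`. -/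
lemma norm_chebyshev_le (n : ℕ) (w : ℂ) :
    ‖(Polynomial.Chebyshev.T ℂ n).eval w‖ ≤ (2 * ‖w‖ + 1) ^ n := by
  obtain ⟨θ, rfl⟩ := Complex.cos_surjective w
  rw [Polynomial.Chebyshev.T_complex_cos]
  refine (norm_cos_le _).trans ?_
  have h1 := sinh_abs_im_le_norm_cos θ
  rw [Real.sinh_eq] at h1
  have h2 : Real.exp (-|θ.im|) ≤ 1 := Real.exp_le_one_iff.2 (by simp)
  have h3 : |(((n : ℤ) : ℂ) * θ).im| = n * |θ.im| := by
    simp [abs_mul]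
  rw [h3, Real.exp_nat_mul]
  gcongr
  linarith

lemma norm_chebyshev_ofReal_le (n : ℕ) {r : ℝ} (hr : |r| ≤ 1) :
    ‖(Polynomial.Chebyshev.T ℂ n).eval (r : ℂ)‖ ≤ 1 := by
  rw [← Real.cos_arccos (abs_le.1 hr).1 (abs_le.1 hr).2, Complex.ofReal_cos,
    Polynomial.Chebyshev.T_complex_cos]
  refine (norm_cos_le _).trans ?_
  simp

/-- The lower bound for `T_n` on the imaginary axis, from `I * sinh t = cos (π / 2 - I * t)`. -/
lemma sinh_le_norm_chebyshev (n : ℕ) {t : ℝ} (ht : 0 ≤ t) :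
    Real.sinh (n * t) ≤
      ‖(Polynomial.Chebyshev.T ℂ n).eval (Complex.I * (Real.sinh t : ℝ))‖ := by
  have h1 : Complex.I * (Real.sinh t : ℝ) =
      Complex.cos ((Real.pi : ℂ) / 2 - t * Complex.I) := by
    rw [Complex.cos_pi_div_two_sub, Complex.sin_mul_I, Complex.ofReal_sinh, mul_comm]
  rw [h1, Polynomial.Chebyshev.T_complex_cos]
  refine le_trans (le_of_eq ?_) (sinh_abs_im_le_norm_cos _)
  congr 1
  have : (((n : ℤ) : ℂ) * ((Real.pi : ℂ) / 2 - t * Complex.I)).im = -(n * t) := by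
    have h2 : ((Real.pi : ℂ) / 2).im = 0 := by
      rw [show ((Real.pi : ℂ) / 2) = ((Real.pi / 2 : ℝ) : ℂ) by push_cast; ring]
      exact Complex.ofReal_im _
    simp [Complex.mul_im, h2]
  rw [this, abs_neg, abs_of_nonneg (by positivity)]

/-! ### Bernstein's inequality for scalar functions -/

/-- Phragmén–Lindelöf in the upper half-plane for `T_n (G z) * exp (I * n * σ * z)`, transported to
the right half-plane by `z = I * ζ`. -/
lemma norm_chebyshev_comp_le {G : ℂ → ℂ} {R σ : ℝ} (hG : Differentiable ℂ G) (hσ : 0 < σ)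
    (hbd : ∀ z, ‖G z‖ ≤ R * Real.exp (σ * ‖z‖))
    (hreal : ∀ x : ℝ, ∃ r : ℝ, |r| ≤ 1 ∧ G x = r) (n : ℕ) {y : ℝ} (hy : 0 ≤ y) :
    ‖(Polynomial.Chebyshev.T ℂ n).eval (G (Complex.I * y))‖ ≤ Real.exp (n * (σ * y)) := by
  have hR : 0 ≤ R := by simpa using (norm_nonneg _).trans (hbd 0)
  have hcheb : ∀ z : ℂ, ‖(Polynomial.Chebyshev.T ℂ n).eval (G (Complex.I * z))‖ ≤
      (2 * R + 1) ^ n * Real.exp (n * (σ * ‖z‖)) := by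
    intro z
    refine (norm_chebyshev_le n _).trans ?_
    rw [Real.exp_nat_mul, ← mul_pow]
    gcongr
    have h1 := hbd (Complex.I * z)
    rw [norm_mul, Complex.norm_I, one_mul] at h1
    have h2 : 1 ≤ Real.exp (σ * ‖z‖) := Real.one_le_exp (by positivity)
    linarith
  set f : ℂ → ℂ := fun z => (Polynomial.Chebyshev.T ℂ n).eval (G (Complex.I * z)) *
    Complex.exp (-(n * (σ * z))) with hf
  have hfd : Differentiable ℂ f := by
    have : Differentiable ℂ fun z => G (Complex.I * z) := hG.comp (by fun_prop)
    have h2 : Differentiable ℂ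
        fun z => (Polynomial.Chebyshev.T ℂ n).eval (G (Complex.I * z)) :=
      (Polynomial.Chebyshev.T ℂ n).differentiable.comp this
    exact h2.mul (by fun_prop)
  have hexpn : ∀ z : ℂ, ‖Complex.exp (-(n * (σ * z)))‖ = Real.exp (-(n * (σ * z.re))) := by
    intro z
    rw [Complex.norm_exp]
    simp
  have key : ‖f y‖ ≤ 1 := by
    refine PhragmenLindelof.right_half_plane_of_bounded_on_real hfd.diffContOnCl
      ⟨1, by norm_num, n * σ, ?_⟩ ?_ ?_ (by simpa using hy)
    · refine Asymptotics.IsBigO.of_bound ((2 * R + 1) ^ n) ?_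
      refine Filter.eventually_inf_principal.2 (Filter.Eventually.of_forall fun z hz => ?_)
      have hz' : 0 < z.re := hz
      rw [hf, norm_mul, hexpn, Real.norm_of_nonneg (Real.exp_pos _).le, Real.rpow_one, mul_assoc]
      have h1 : Real.exp (-(n * (σ * z.re))) ≤ 1 := Real.exp_le_one_iff.2 (by
        have : 0 ≤ (n : ℝ) * (σ * z.re) := by positivity
        linarith)
      calc _ ≤ ((2 * R + 1) ^ n * Real.exp (n * (σ * ‖z‖))) * 1 := by
            gcongr
            exact hcheb z
        _ = _ := mul_one _
    · refine ⟨(2 * R + 1) ^ n, ?_⟩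
      rw [Filter.eventually_map]
      filter_upwards [Filter.eventually_ge_atTop 0] with x hx
      have h1 := hcheb x
      rw [Complex.norm_real, Real.norm_of_nonneg hx] at h1
      rw [hf, norm_mul, hexpn, Complex.ofReal_re]
      calc _ ≤ ((2 * R + 1) ^ n * Real.exp (n * (σ * x))) * Real.exp (-(n * (σ * x))) := by
            gcongr
        _ = _ := by rw [mul_assoc, ← Real.exp_add]; simp
    · intro x
      obtain ⟨r, hr, hGr⟩ := hreal (-x)
      have h1 : Complex.I * (x * Complex.I) = ((-x : ℝ) : ℂ) := by
        rw [mul_left_comm, Complex.I_mul_I]; push_cast; ring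
      rw [hf, norm_mul, hexpn]
      simp only [h1, hGr]
      simpa using norm_chebyshev_ofReal_le n hr
  rw [hf, norm_mul, hexpn, Complex.ofReal_re, Real.exp_neg, ← div_eq_mul_inv,
    div_le_one (Real.exp_pos _)] at key
  exact key

/-- The bounds `sinh (n * t) ≤ exp (n * b)` for all `n` force `t ≤ b`: the exponential rates in `n`
are compared, so the constant factors are immaterial. -/
lemma le_sinh_of_chebyshev {s b : ℝ} (hb : 0 ≤ b)
    (h : ∀ n : ℕ, ‖(Polynomial.Chebyshev.T ℂ n).eval (Complex.I * s)‖ ≤ Real.exp (n * b)) :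
    s ≤ Real.sinh b := by
  by_contra! hlt
  obtain ⟨t, rfl⟩ := Real.sinh_surjective s
  have htb : b < t := Real.sinh_lt_sinh.1 hlt
  obtain ⟨n, hn⟩ := exists_nat_gt (3 / (t - b))
  rw [div_lt_iff₀ (by linarith)] at hn
  have h1 := (sinh_le_norm_chebyshev n (hb.trans htb.le)).trans (h n)
  rw [Real.sinh_eq] at h1
  have h2 : Real.exp (-(n * t)) ≤ 1 := Real.exp_le_one_iff.2 (by
    have : 0 ≤ (n : ℝ) * t := mul_nonneg (Nat.cast_nonneg n) (hb.trans htb.le)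
    linarith)
  have h3 : 1 ≤ Real.exp (n * b) := Real.one_le_exp (by positivity)
  have h4 : Real.exp (n * t) = Real.exp (n * b) * Real.exp (n * (t - b)) := by
    rw [← Real.exp_add]; congr 1; ring
  have h5 := Real.add_one_le_exp ((n : ℝ) * (t - b))
  have h6 : 3 < Real.exp (n * (t - b)) := by linarith
  nlinarith

/-- Bernstein's inequality at the origin for a real function with its chain of derivatives. -/
lemma scalar_bernstein {u : ℕ → ℝ → ℝ} {R σ : ℝ} (hσ : 0 < σ)
    (hu : ∀ k x, HasDerivAt (u k) (u (k + 1) x) x) (hb : ∀ k x, |u k x| ≤ R * σ ^ k)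
    (h1 : ∀ x, |u 0 x| ≤ 1) : u 1 0 ≤ σ := by
  -- the chain of derivatives of the odd part of `u 0`
  set v : ℕ → ℝ → ℝ := fun k x => (u k x - (-1) ^ k * u k (-x)) / 2 with hvdef
  have hv : ∀ k x, HasDerivAt (v k) (v (k + 1) x) x := by
    intro k x
    have h2 : HasDerivAt (fun x => u k (-x)) (-u (k + 1) (-x)) x := by
      simpa [Function.comp_def] using (hu k (-x)).scomp x (hasDerivAt_neg x)
    refine (((hu k x).sub (h2.const_mul ((-1) ^ k))).div_const 2).congr_deriv ?_
    simp only [hvdef, pow_succ]; ring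
  have habs : ∀ (k : ℕ) (C : ℝ), (∀ x, |u k x| ≤ C) → ∀ x, |v k x| ≤ C := by
    intro k C hC x
    have h3 := abs_sub (u k x) ((-1) ^ k * u k (-x))
    rw [abs_mul, abs_pow, abs_neg, abs_one, one_pow, one_mul] at h3
    simp only [hvdef, abs_div, abs_two]
    linarith [hC x, hC (-x)]
  have hvb : ∀ k x, |v k x| ≤ R * σ ^ k := fun k => habs k _ (hb k)
  have hv1 : ∀ x, |v 0 x| ≤ 1 := habs 0 1 h1
  have hodd : ∀ k, Even k → v k 0 = 0 := by
    intro k hk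
    simp [hvdef, hk.neg_one_pow]
  have hv10 : v 1 0 = u 1 0 := by simp [hvdef]
  set G := entireExt fun k => v k 0 with hGdef
  have hGd : Differentiable ℂ G := differentiable_entireExt fun k => hvb k 0
  have hGbd := norm_entireExt_le fun k => hvb k 0
  have hGreal : ∀ x : ℝ, G x = (v 0 x : ℂ) := by
    intro x
    rcases le_total 0 x with hx | hx
    · exact entireExt_ofReal hv hvb hx
    · have h2 := entireExt_ofReal hv hvb (neg_nonneg.2 hx)
      rw [Complex.ofReal_neg, entireExt_neg hodd, neg_eq_iff_eq_neg] at h2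
      rw [hGdef, h2, ← Complex.ofReal_neg]
      congr 1
      simp [hvdef]; ring
  have hder : deriv G 0 = (v 1 0 : ℂ) := by
    have h2 : HasDerivAt (fun x : ℝ => G x) (deriv G ((0 : ℝ) : ℂ)) 0 :=
      (hGd _).hasDerivAt.comp_ofReal
    have h3 : HasDerivAt (fun x : ℝ => G x) ((v 1 0 : ℝ) : ℂ) 0 := by
      simp only [hGreal]
      exact (hv 0 0).ofReal_comp
    simpa using h2.unique h3
  choose s hs using entireExt_imag hodd
  have hs_le : ∀ y, 0 ≤ y → s y ≤ Real.sinh (σ * y) := by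
    intro y hy
    refine le_sinh_of_chebyshev (by positivity) fun n => ?_
    rw [← hs y]
    exact norm_chebyshev_comp_le hGd hσ hGbd (fun x => ⟨_, hv1 x, hGreal x⟩) n hy
  have hs0 : s 0 = 0 := by
    have h2 := hs 0
    have h3 := hGreal 0
    rw [hodd 0 Even.zero] at h3
    simp only [Complex.ofReal_zero, mul_zero] at h2 h3
    rw [← hGdef, h3] at h2
    simpa using h2.symm
  -- `s` is differentiable at the origin, with the derivative of `G` there
  have hsd : HasDerivAt s (v 1 0) 0 := by
    have h2 : HasDerivAt (fun z : ℂ => G (Complex.I * z)) (deriv G 0 * Complex.I)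
        ((0 : ℝ) : ℂ) := by
      have h3 : HasDerivAt (fun z : ℂ => Complex.I * z) Complex.I ((0 : ℝ) : ℂ) := by
        simpa using (hasDerivAt_id ((0 : ℝ) : ℂ)).const_mul Complex.I
      have h4 : HasDerivAt G (deriv G 0) (Complex.I * ((0 : ℝ) : ℂ)) := by
        simpa using (hGd 0).hasDerivAt
      exact h4.comp _ h3
    have h3 := (h2.const_mul (-Complex.I)).real_of_complex
    refine (h3.congr_of_eventuallyEq (Filter.Eventually.of_forall fun y => ?_)).congr_deriv ?_
    · change s y = (-Complex.I * G (Complex.I * y)).re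
      rw [hGdef, hs y]
      simp [← mul_assoc]
    · rw [hder]; simp
  have hsinh : HasDerivAt (fun y => Real.sinh (σ * y)) σ 0 := by
    have h2 : HasDerivAt (fun y : ℝ => σ * y) σ 0 := by
      simpa using (hasDerivAt_id (0 : ℝ)).const_mul σ
    simpa using h2.sinh
  rw [← hv10]
  refine le_of_tendsto_of_tendsto hsd.tendsto_slope_zero_right hsinh.tendsto_slope_zero_right ?_
  filter_upwards [self_mem_nhdsWithin] with y hy
  have hy' : 0 < y := hy
  simp only [zero_add, hs0, mul_zero, Real.sinh_zero, sub_zero, smul_eq_mul]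
  exact mul_le_mul_of_nonneg_left (hs_le y hy'.le) (by positivity)

/-! ### Bernstein's inequality for the group -/

lemma GenDeriv.hasDerivAt {B : Type*} [NormedAddCommGroup B] [NormedSpace ℂ B]
    {T : ℝ → B →L[ℂ] B} (hTadd : ∀ s t : ℝ, T (s + t) = T s * T t) {f g : B}
    (h : GenDeriv T f g) (x : ℝ) : HasDerivAt (fun t => T t f) (T x g) x := by
  rw [hasDerivAt_iff_tendsto_slope_zero]
  refine (((T x).continuous.tendsto g).comp h).congr fun t => ?_
  have h1 : T x (t⁻¹ • (T t f - f)) = t⁻¹ • T x (T t f - f) :=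
    ((T x).restrictScalars ℝ).map_smul _ _
  simp only [Function.comp_apply]
  rw [h1, hTadd, map_sub]
  rfl

lemma norm_chain_one_le {B : Type*} [NormedAddCommGroup B] [NormedSpace ℂ B]
    {T : ℝ → B →L[ℂ] B} (hT1 : T 0 = 1) (hTadd : ∀ s t : ℝ, T (s + t) = T s * T t)
    (hTiso : ∀ (t : ℝ) (f : B), ‖T t f‖ = ‖f‖) {σ : ℝ} (hσ : 0 < σ) {c : ℕ → B}
    (hc : ∀ i : ℕ, GenDeriv T (c i) (c (i + 1))) {R : ℝ} (hR : ∀ k, ‖c k‖ ≤ R * σ ^ k) :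
    ‖c 1‖ ≤ σ * ‖c 0‖ := by
  -- normalising by `M > ‖c 0‖` rather than by `‖c 0‖` also covers the case `c 0 = 0`
  have main : ∀ M, ‖c 0‖ < M → ‖c 1‖ ≤ σ * M := by
    intro M hM
    have hM0 : 0 < M := (norm_nonneg _).trans_lt hM
    obtain ⟨φ, hφ, hφ1⟩ := exists_dual_vector'' ℝ (c 1)
    have hφb : ∀ (x : ℝ) (k : ℕ), |φ (T x (c k))| ≤ ‖c k‖ := by
      intro x k
      have := φ.le_of_opNorm_le hφ (T x (c k))
      rwa [hTiso, one_mul, Real.norm_eq_abs] at this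
    have h := scalar_bernstein (u := fun k x => φ (T x (c k)) / M) (R := R / M) hσ ?_ ?_ ?_
    · simp only [hT1, one_apply_eq_self, hφ1] at h
      rw [div_le_iff₀ hM0] at h
      simpa using h
    · intro k x
      exact ((φ.hasFDerivAt.comp_hasDerivAt x ((hc k).hasDerivAt hTadd x))).div_const M
    · intro k x
      rw [abs_div, abs_of_pos hM0, div_mul_eq_mul_div]
      gcongr
      exact (hφb x k).trans (hR k)
    · intro x
      rw [abs_div, abs_of_pos hM0, div_le_one hM0]
      exact (hφb x 0).trans hM.le
  refine le_of_forall_gt_imp_ge_of_dense fun a ha => ?_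
  have h := main (a / σ) (by rwa [lt_div_iff₀ hσ, mul_comm])
  rwa [mul_div_cancel₀ _ hσ.ne'] at h

/-- A vector `f ∈ D^∞(D)` (with derivative chain `c`, `c k = D^k f`) belongs to
`B_σ(D)` (i.e. `‖D^k f‖ ≤ σ^k ‖f‖` for all `k`) if and only if
`sup_k σ^{-k} ‖D^k f‖` is finite. -/
theorem bernstein_space_criterion
    {B : Type*} [NormedAddCommGroup B] [NormedSpace ℂ B] [CompleteSpace B]
    (T : ℝ → B →L[ℂ] B)
    (hT1 : T 0 = 1) (hTadd : ∀ s t : ℝ, T (s + t) = T s * T t)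
    (hTiso : ∀ (t : ℝ) (f : B), ‖T t f‖ = ‖f‖)
    (hTcont : ∀ f : B, Continuous fun t : ℝ => T t f)
    (σ : ℝ) (hσ : 0 < σ) (f : B)
    (c : ℕ → B) (hc0 : c 0 = f) (hc : ∀ i : ℕ, GenDeriv T (c i) (c (i + 1))) :
    (∀ k : ℕ, ‖c k‖ ≤ σ ^ k * ‖f‖) ↔ ∃ R : ℝ, ∀ k : ℕ, σ⁻¹ ^ k * ‖c k‖ ≤ R := by
  have hpos : ∀ k : ℕ, 0 < σ ^ k := fun k => pow_pos hσ k
  constructor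
  · intro h
    refine ⟨‖f‖, fun k => ?_⟩
    rw [inv_pow, inv_mul_le_iff₀ (hpos k)]
    exact h k
  · rintro ⟨R, hR⟩ k
    have hR' : ∀ k, ‖c k‖ ≤ R * σ ^ k := by
      intro k
      have := hR k
      rwa [inv_pow, inv_mul_le_iff₀ (hpos k), mul_comm] at this
    induction k with
    | zero => simp [hc0]
    | succ k ih =>
      have h := norm_chain_one_le hT1 hTadd hTiso hσ (c := fun i => c (k + i))
        (fun i => hc (k + i)) (R := R * σ ^ k) (fun i => by
          have := hR' (k + i)
          rwa [pow_add, ← mul_assoc] at this)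
      calc ‖c (k + 1)‖ ≤ σ * ‖c k‖ := h
        _ ≤ σ * (σ ^ k * ‖f‖) := by gcongr
        _ = _ := by ring
end
end

section
/- Let 1 ≤ p < ∞ and r ∈ ℕ. There exist constants c > 0 and C > 0 such that for all f ∈ X^p and all s ≥ 0: c Ω^r_p(s, f) ≤ K(s^r, f, X^p, W^r_p) ≤ C ( Ω^r_p(s, f) + min(s^r, 1) ‖f‖_{X^p} ). -/
/-!
The statement only uses that the `U_j` are commuting, strongly continuous one-parameter groups of
contractions on a Banach space. This is checked by conjugating with `y ↦ (exp y_i)_i`, which maps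
Lebesgue measure to the Mellin measure and turns the dilations into translations of `L^p(ℝⁿ)`
(`commContractionGroups_of_isMellinTranslation`); the rest is carried out for abstract groups.

*Lower bound.* If `f = f₀ + f₁` with `f₁ ∈ W^r`, a product of `r` differences is bounded by `2^r`
on `f₀`. On `f₁`, the factors commute and may be sorted so as to match one of the derivatives
`Θ₁^{a₁}⋯Θₙ^{aₙ}`; each factor then costs `‖(U_j(τ) - 1) h‖ ≤ τ ‖Θ_j h‖`
(`CommModel.norm_prod_le_of_isIterDeriv`).

*Upper bound.* Let `S_j = s⁻¹ ∫₀ˢ U_j(u) du`, a contraction with `Θ_j S_j = s⁻¹ (U_j(s) - 1)`, and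
put `V = ∏_j S_j^r`, `A = 1 - (1 - V)^r`. The competitor in the K-functional is `f₁ = A f`.
* `f - A f = (1 - V)^r f`, and `‖(1 - V) g‖ ≤ r ∑_j ‖(1 - S_j) g‖` by telescoping. Iterating gives
  `‖f - A f‖ ≤ r^r ∑_J ‖∏_i (1 - S_{J i}) f‖`. Each `1 - S_j` is an average of the operators
  `1 - U_j(τ)`, `0 ≤ τ ≤ s`, so the sum is at most the mixed modulus. It matters here that the
  mixed modulus allows different steps `τ_i`.
* `A = V Q` with `Q = ∑_{k<r} (1 - V)^k` bounded, and `V` is divisible by `∏_j S_j^{a_j}` for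
  `|a| = r`. Hence `Θ^a A f` is `s^{-r}` times a bounded operator applied to
  `∏_j (U_j(s) - 1)^{a_j} f`, which is again controlled by the mixed modulus.

This proves the bound for `0 < s ≤ 1`. For `s ≥ 1` the trivial bound `K ≤ ‖f‖` suffices, and
`s = 0` follows by letting `s → 0+` (`Kfun_zero_le`).
-/

open MeasureTheory Filter Topology ENNReal

noncomputable section

/-- The measure `dμ = dx₁⋯dxₙ/(x₁⋯xₙ)` on `(0,∞)ⁿ ⊂ ℝⁿ`. -/
def mellinMeasure (n : ℕ) : Measure (Fin n → ℝ) :=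
  ((volume : Measure (Fin n → ℝ)).restrict {x | ∀ i, 0 < x i}).withDensity
    fun x => ∏ i, ENNReal.ofReal (x i)⁻¹

/-- Dilation of the `j`-th coordinate by `e^t`. -/
def mellinDilate {n : ℕ} (j : Fin n) (t : ℝ) (x : Fin n → ℝ) : Fin n → ℝ :=
  Function.update x j (Real.exp t * x j)

/-- `U` is the family of Mellin translation groups `(U_j(t)f)(x) = f(x₁,…,e^t x_j,…,xₙ)`. -/
def IsMellinTranslation {n : ℕ} (p : ℝ≥0∞) [Fact (1 ≤ p)]
    (U : Fin n → ℝ → (Lp ℂ p (mellinMeasure n) →L[ℂ] Lp ℂ p (mellinMeasure n))) : Prop :=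
  ∀ (j : Fin n) (t : ℝ) (f : Lp ℂ p (mellinMeasure n)),
    (U j t f : (Fin n → ℝ) → ℂ) =ᵐ[mellinMeasure n] fun x => f (mellinDilate j t x)

/-- Iterated generator: `IsIterDeriv U [j₁,…,j_k] f g` means `g = Θ_{j₁}⋯Θ_{j_k} f`. -/
def IsIterDeriv {E : Type*} [NormedAddCommGroup E] [NormedSpace ℂ E] {n : ℕ}
    (U : Fin n → ℝ → E →L[ℂ] E) : List (Fin n) → E → E → Prop
  | [], f, g => g = f
  | j :: L, f, g => ∃ h, IsIterDeriv U L f h ∧ GenDeriv (U j) h g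

/-- Modulus of continuity `ω^m(s,f) = sup_{0≤τ≤s} ‖(T(τ)-I)^m f‖`. -/
def omegaMod {E : Type*} [NormedAddCommGroup E] [NormedSpace ℂ E]
    (T : ℝ → E →L[ℂ] E) (m : ℕ) (s : ℝ) (f : E) : ℝ :=
  sSup ((fun τ => ‖((T τ - 1) ^ m) f‖) '' Set.Icc 0 s)

/-- Mixed modulus of continuity
`Ω^r(s,f) = Σ_{j₁,…,j_r} sup_{0≤τᵢ≤s} ‖(U_{j₁}(τ₁)-I)⋯(U_{j_r}(τ_r)-I) f‖`. -/
def mixedMod {E : Type*} [NormedAddCommGroup E] [NormedSpace ℂ E] {n : ℕ}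
    (U : Fin n → ℝ → E →L[ℂ] E) (r : ℕ) (s : ℝ) (f : E) : ℝ :=
  ∑ J : Fin r → Fin n,
    sSup ((fun τ : Fin r → ℝ => ‖((List.ofFn fun i => U (J i) (τ i) - 1).prod) f‖) ''
      Set.univ.pi fun _ => Set.Icc 0 s)

/-- The list `[1,…,1,2,…,2,…]` encoding the operator `Θ₁^{a₁}⋯Θₙ^{aₙ}`. -/
def multiIndexList {n : ℕ} (a : Fin n → ℕ) : List (Fin n) :=
  (List.ofFn fun i => List.replicate (a i) i).flatten

/-- `f` belongs to the Sobolev–Mellin space `W^r`: all derivatives `Θ₁^{a₁}⋯Θₙ^{aₙ} f`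
with `|a| = r` exist. -/
def memW {E : Type*} [NormedAddCommGroup E] [NormedSpace ℂ E] {n : ℕ}
    (U : Fin n → ℝ → E →L[ℂ] E) (r : ℕ) (f : E) : Prop :=
  ∀ a : Fin n → ℕ, (∑ i, a i) = r → ∃ g, IsIterDeriv U (multiIndexList a) f g

/-- The value `Θ_{j₁}⋯Θ_{j_k} f` (or `0` if it does not exist). -/
def iterDerivVal {E : Type*} [NormedAddCommGroup E] [NormedSpace ℂ E] {n : ℕ}
    (U : Fin n → ℝ → E →L[ℂ] E) (L : List (Fin n)) (f : E) : E :=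
  haveI := Classical.propDecidable (∃ g, IsIterDeriv U L f g)
  if h : ∃ g, IsIterDeriv U L f g then h.choose else 0

/-- The Sobolev–Mellin norm `‖f‖ + Σ_{|a|=r} ‖Θ₁^{a₁}⋯Θₙ^{aₙ} f‖` (for `r = 0` it is `‖f‖`). -/
def WNorm {E : Type*} [NormedAddCommGroup E] [NormedSpace ℂ E] {n : ℕ}
    (U : Fin n → ℝ → E →L[ℂ] E) (r : ℕ) (f : E) : ℝ :=
  ‖f‖ + ∑ a ∈ (Fintype.piFinset fun _ : Fin n => Finset.range (r + 1)).filter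
      (fun a => (∑ i, a i) = r ∧ r ≠ 0),
    ‖iterDerivVal U (multiIndexList a) f‖

/-- Peetre's K-functional for the pair `(X^p, W^r_p)`. -/
def Kfun {E : Type*} [NormedAddCommGroup E] [NormedSpace ℂ E] {n : ℕ}
    (U : Fin n → ℝ → E →L[ℂ] E) (r : ℕ) (t : ℝ) (f : E) : ℝ :=
  sInf {v | ∃ f₀ f₁ : E, f = f₀ + f₁ ∧ memW U r f₁ ∧ v = ‖f₀‖ + t * WNorm U r f₁}

/-! ### Commuting contraction groups and their Steklov averages -/

/-- The `U j` are pairwise commuting, strongly continuous one-parameter groups of contractions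
(hence of isometries) on `E`. -/
structure CommContractionGroups {E : Type*} [NormedAddCommGroup E] [NormedSpace ℂ E] {n : ℕ}
    (U : Fin n → ℝ → E →L[ℂ] E) : Prop where
  map_zero : ∀ j, U j 0 = 1
  map_add : ∀ j s t, U j (s + t) = U j s * U j t
  comm : ∀ i j s t, U i s * U j t = U j t * U i s
  norm_le : ∀ j t x, ‖U j t x‖ ≤ ‖x‖
  cont : ∀ j x, Continuous fun t => U j t x

section Abstract

variable {E : Type*} [NormedAddCommGroup E] [NormedSpace ℂ E] {n : ℕ}
  {U : Fin n → ℝ → E →L[ℂ] E}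

lemma genDeriv_iff_hasDerivAt (hU : CommContractionGroups U) {j : Fin n} {h g : E} :
    GenDeriv (U j) h g ↔ HasDerivAt (fun t => U j t h) g 0 := by
  rw [hasDerivAt_iff_tendsto_slope_zero]
  simp [GenDeriv, hU.map_zero]

/-- The mean value inequality along the orbit `t ↦ U_j(t) h`, whose derivative is `U_j(t) g`. -/
lemma norm_sub_le_of_genDeriv (hU : CommContractionGroups U) {j : Fin n} {h g : E}
    (hg : GenDeriv (U j) h g) {τ : ℝ} (hτ : 0 ≤ τ) :
    ‖U j τ h - h‖ ≤ τ * ‖g‖ := by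
  rw [genDeriv_iff_hasDerivAt hU] at hg
  have hd : ∀ t, HasDerivAt (fun t => U j t h) (U j t g) t := by
    intro t
    have h1 : HasDerivAt (fun u : ℝ => U j (u - t) h) g t := by
      have : HasDerivAt (fun t => U j t h) g (t - t) := by simpa using hg
      exact this.comp_sub_const t t
    have h2 : HasDerivAt (fun u : ℝ => ((U j t).restrictScalars ℝ) (U j (u - t) h))
        (((U j t).restrictScalars ℝ) g) t :=
      ((U j t).restrictScalars ℝ).hasFDerivAt.comp_hasDerivAt t h1
    refine h2.congr_of_eventuallyEq (Eventually.of_forall fun u => ?_)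
    have := congrArg (fun A : E →L[ℂ] E => A h) (hU.map_add j t (u - t))
    simpa using this
  have := norm_image_sub_le_of_norm_deriv_le_segment' (f := fun t => U j t h) (a := 0) (b := τ)
    (C := ‖g‖) (fun t _ => (hd t).hasDerivWithinAt) (fun t _ => hU.norm_le j t g) τ ⟨hτ, le_rfl⟩
  simpa [hU.map_zero, mul_comm] using this

lemma genDeriv_map {j : Fin n} {h g : E} (hg : GenDeriv (U j) h g) (B : E →L[ℂ] E)
    (hB : ∀ t, B * U j t = U j t * B) : GenDeriv (U j) (B h) (B g) := by
  have h1 := ((B.restrictScalars ℝ).continuous.tendsto g).comp hg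
  refine h1.congr fun t => ?_
  have := congrArg (fun A : E →L[ℂ] E => A h) (hB t)
  simp only [mul_apply_eq_comp] at this
  simp [map_sub, this]

/-- The Steklov average `s⁻¹ ∫₀ˢ U_j(u) du` as a bounded operator (it is `0` for `s = 0`). -/
def steklov (hU : CommContractionGroups U) (s : ℝ) (j : Fin n) : E →L[ℂ] E :=
  LinearMap.mkContinuous
    { toFun := fun x => s⁻¹ • ∫ u in (0 : ℝ)..s, U j u x
      map_add' := fun x y => by
        simp only [map_add]
        rw [intervalIntegral.integral_add ((hU.cont j x).intervalIntegrable _ _)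
          ((hU.cont j y).intervalIntegrable _ _), smul_add]
      map_smul' := fun c x => by
        simp only [map_smul, RingHom.id_apply]
        rw [intervalIntegral.integral_smul, smul_comm] } 1
    (fun x => by
      have h := intervalIntegral.norm_integral_le_of_norm_le_const (a := 0) (b := s)
        (f := fun u => U j u x) (C := ‖x‖) fun u _ => hU.norm_le j u x
      rw [LinearMap.coe_mk, AddHom.coe_mk, norm_smul, norm_inv, Real.norm_eq_abs, one_mul]
      rw [sub_zero] at h
      rcases eq_or_ne s 0 with rfl | hs
      · simp
      · rw [inv_mul_le_iff₀ (abs_pos.2 hs), mul_comm]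
        exact h)

lemma steklov_apply (hU : CommContractionGroups U) (s : ℝ) (j : Fin n) (x : E) :
    steklov hU s j x = s⁻¹ • ∫ u in (0 : ℝ)..s, U j u x := rfl

lemma norm_steklov_le (hU : CommContractionGroups U) (s : ℝ) (j : Fin n) (x : E) :
    ‖steklov hU s j x‖ ≤ ‖x‖ := by
  simpa using (LinearMap.mkContinuous_norm_le _ zero_le_one _ : ‖steklov hU s j‖ ≤ 1) |> fun h =>
    (steklov hU s j).le_of_opNorm_le h x

lemma steklov_comm [CompleteSpace E] (hU : CommContractionGroups U) (s : ℝ) (j : Fin n)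
    (B : E →L[ℂ] E) (hB : ∀ t, B * U j t = U j t * B) :
    B * steklov hU s j = steklov hU s j * B := by
  ext x
  have h1 := (B.restrictScalars ℝ).intervalIntegral_comp_comm
    ((hU.cont j x).intervalIntegrable (μ := volume) 0 s)
  have h2 : ∀ u, B (U j u x) = U j u (B x) := fun u =>
    congrArg (fun A : E →L[ℂ] E => A x) (hB u)
  simp only [ContinuousLinearMap.coe_restrictScalars', h2] at h1
  simp only [mul_apply_eq_comp, steklov_apply, h1]
  exact (B.restrictScalars ℝ).map_smul _ _

/-- `Θ_j S_j x = s⁻¹ (U_j(s) x - x)`: the fundamental theorem of calculus for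
`U_j(t) S_j x = s⁻¹ ∫ₜ^{t+s} U_j(u) x du`. -/
lemma genDeriv_steklov [CompleteSpace E] (hU : CommContractionGroups U) (s : ℝ)
    (j : Fin n) (x : E) :
    GenDeriv (U j) (steklov hU s j x) (s⁻¹ • (U j s x - x)) := by
  rw [genDeriv_iff_hasDerivAt hU]
  have hF : ∀ y, HasDerivAt (fun y => ∫ u in (0 : ℝ)..y, U j u x) (U j y x) y := fun y =>
    intervalIntegral.integral_hasDerivAt_right ((hU.cont j x).intervalIntegrable _ _)
      ((hU.cont j x).stronglyMeasurableAtFilter _ _) (hU.cont j x).continuousAt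
  have h1 : HasDerivAt (fun t : ℝ => ∫ u in (0 : ℝ)..(t + s), U j u x) (U j s x) 0 := by
    have := hF (0 + s)
    rw [zero_add] at this
    have h := HasDerivAt.comp_add_const (f := fun y => ∫ u in (0 : ℝ)..y, U j u x) 0 s
      (by simpa using this)
    exact h
  have h2 : HasDerivAt (fun t : ℝ => ∫ u in (0 : ℝ)..t, U j u x) x 0 := by
    simpa [hU.map_zero] using hF 0
  refine ((h1.sub h2).const_smul s⁻¹).congr_of_eventuallyEq (Eventually.of_forall fun t => ?_)
  have h3 := congrArg (fun A : E →L[ℂ] E => A x) (steklov_comm hU s j (U j t)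
    (fun u => hU.comm j j t u))
  simp only [mul_apply_eq_comp, steklov_apply] at h3
  simp only [steklov_apply, Pi.smul_apply, Pi.sub_apply]
  rw [h3]
  congr 1
  have h4 : ∀ u, U j u (U j t x) = U j (u + t) x := fun u => by
    rw [hU.map_add]; rfl
  simp only [h4]
  rw [intervalIntegral.integral_comp_add_right (fun u => U j u x),
    intervalIntegral.integral_interval_sub_left ((hU.cont j x).intervalIntegrable _ _)
      ((hU.cont j x).intervalIntegrable _ _), zero_add, add_comm]

/-- `1 - S_j` is an average of the operators `1 - U_j(τ)`, `0 ≤ τ ≤ s`. -/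
lemma norm_steklov_sub_le [CompleteSpace E] (hU : CommContractionGroups U) {s : ℝ} (hs : 0 < s)
    (j : Fin n) (x : E) {M : ℝ} (hM : ∀ τ ∈ Set.Icc 0 s, ‖U j τ x - x‖ ≤ M) :
    ‖x - steklov hU s j x‖ ≤ M := by
  have h : x - steklov hU s j x = s⁻¹ • ∫ u in (0 : ℝ)..s, (x - U j u x) := by
    rw [intervalIntegral.integral_sub (by simp) ((hU.cont j x).intervalIntegrable _ _),
      steklov_apply, smul_sub, intervalIntegral.integral_const, smul_smul, sub_zero,
      inv_mul_cancel₀ hs.ne', one_smul]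
  rw [h, norm_smul, norm_inv, Real.norm_eq_abs, abs_of_pos hs, inv_mul_le_iff₀ hs, mul_comm]
  have := intervalIntegral.norm_integral_le_of_norm_le_const (a := 0) (b := s)
        (f := fun u => x - U j u x) (C := M) fun u hu => by
    rw [Set.uIoc_of_le hs.le] at hu
    rw [norm_sub_rev]
    exact hM u ⟨hu.1.le, hu.2⟩
  rwa [sub_zero, abs_of_pos hs] at this

lemma IsIterDeriv.unique {L : List (Fin n)} {f g g' : E} (h : IsIterDeriv U L f g)
    (h' : IsIterDeriv U L f g') : g = g' := by
  induction L generalizing g g' with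
  | nil => exact Eq.trans h (Eq.symm h')
  | cons j L ih =>
    obtain ⟨k, hk, hg⟩ := h
    obtain ⟨k', hk', hg'⟩ := h'
    obtain rfl := ih hk hk'
    exact tendsto_nhds_unique hg hg'

lemma iterDerivVal_spec {L : List (Fin n)} {f : E} (h : ∃ g, IsIterDeriv U L f g) :
    IsIterDeriv U L f (iterDerivVal U L f) := by
  unfold iterDerivVal
  rw [dif_pos h]
  exact h.choose_spec

/-! ### The sorted list of a multi-index -/

lemma count_multiIndexList (a : Fin n → ℕ) (j : Fin n) : (multiIndexList a).count j = a j := by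
  simp [multiIndexList, List.count_flatten, List.map_ofFn, List.sum_ofFn, Function.comp_def,
    List.count_replicate]

lemma length_multiIndexList (a : Fin n → ℕ) : (multiIndexList a).length = ∑ i, a i := by
  simp [multiIndexList, List.length_flatten, List.map_ofFn, List.sum_ofFn, Function.comp_def]

lemma prod_map_multiIndexList {R : Type*} [CommMonoid R] (a : Fin n → ℕ) (σ : Fin n → R) :
    ((multiIndexList a).map σ).prod = ∏ i, σ i ^ a i := by
  simp [multiIndexList, List.map_flatten, List.prod_flatten, List.map_ofFn, List.prod_ofFn,
    Function.comp_def]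

lemma perm_multiIndexList (L : List (Fin n)) : L.Perm (multiIndexList fun j => L.count j) :=
  List.perm_iff_count.2 fun j => (count_multiIndexList (fun j => L.count j) j).symm

end Abstract

/-! ### A commutative ring of operators -/

section Model

universe v

/-- A commutative ring `R` acting on `E` through `Φ`, with elements `u j t` acting as `U j t` and
elements `σ j` acting as the Steklov averages of length `s`. Working in `R` rather than in
`E →L[ℂ] E` makes `Finset` products and `ring` available. -/
structure CommModel {E : Type v} [NormedAddCommGroup E] [NormedSpace ℂ E] {n : ℕ}
    {U : Fin n → ℝ → E →L[ℂ] E} (hU : CommContractionGroups U) (s : ℝ)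
    (R : Type v) [CommRing R] where
  Φ : R →+* (E →L[ℂ] E)
  u : Fin n → ℝ → R
  σ : Fin n → R
  Φ_u : ∀ j t, Φ (u j t) = U j t
  Φ_σ : ∀ j, Φ (σ j) = steklov hU s j

lemma exists_commModel {E : Type v} [NormedAddCommGroup E] [NormedSpace ℂ E] [CompleteSpace E]
    {n : ℕ} {U : Fin n → ℝ → E →L[ℂ] E} (hU : CommContractionGroups U) (s : ℝ) :
    ∃ (R : Type v) (_ : CommRing R), Nonempty (CommModel hU s R) := by
  let G : Set (E →L[ℂ] E) :=
    Set.range (fun q : Fin n × ℝ => U q.1 q.2) ∪ Set.range (steklov hU s)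
  have hUS : ∀ i t j, U i t * steklov hU s j = steklov hU s j * U i t := fun i t j =>
    steklov_comm hU s j _ fun u => hU.comm i j t u
  have hG : ∀ a ∈ G, ∀ b ∈ G, a * b = b * a := by
    rintro _ (⟨q, rfl⟩ | ⟨i, rfl⟩) _ (⟨q', rfl⟩ | ⟨j, rfl⟩)
    · exact hU.comm _ _ _ _
    · exact hUS _ _ _
    · exact (hUS _ _ _).symm
    · exact steklov_comm hU s j _ fun u => (hUS j u i).symm
  have : IsMulCommutative (Algebra.adjoin ℂ G) := Algebra.isMulCommutative_adjoin ℂ hG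
  let _ : CommRing (Algebra.adjoin ℂ G) :=
    { (inferInstance : Ring (Algebra.adjoin ℂ G)) with mul_comm := fun a b => mul_comm' a b }
  exact ⟨Algebra.adjoin ℂ G, inferInstance, ⟨
    { Φ := (Algebra.adjoin ℂ G).val.toRingHom
      u := fun j t => ⟨U j t, Algebra.subset_adjoin (Or.inl ⟨(j, t), rfl⟩)⟩
      σ := fun j => ⟨steklov hU s j, Algebra.subset_adjoin (Or.inr ⟨j, rfl⟩)⟩
      Φ_u := fun _ _ => rfl
      Φ_σ := fun _ => rfl }⟩⟩

end Model

/-! ### Estimates for products of differences and of averages -/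

section Estimates

universe v

variable {E : Type v} [NormedAddCommGroup E] [NormedSpace ℂ E] {n : ℕ}
  {U : Fin n → ℝ → E →L[ℂ] E}
  {hU : CommContractionGroups U} {s : ℝ} {R : Type v} [CommRing R]

namespace CommModel

variable (D : CommModel hU s R)

lemma mul_apply (x y : R) (f : E) : D.Φ (x * y) f = D.Φ x (D.Φ y f) := by
  rw [_root_.map_mul]; rfl

lemma apply_comm (x y : R) (f : E) : D.Φ x (D.Φ y f) = D.Φ y (D.Φ x f) := by
  rw [← mul_apply, mul_comm, mul_apply]

lemma commute_u (x : R) (j : Fin n) (t : ℝ) : D.Φ x * U j t = U j t * D.Φ x := by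
  rw [← D.Φ_u, ← _root_.map_mul, mul_comm, _root_.map_mul]

lemma sub_one_apply (j : Fin n) (t : ℝ) (f : E) : D.Φ (D.u j t - 1) f = U j t f - f := by
  simp [D.Φ_u]

lemma one_sub_apply (x : R) (f : E) : D.Φ (1 - x) f = f - D.Φ x f := by
  simp

lemma norm_σ_le (j : Fin n) (f : E) : ‖D.Φ (D.σ j) f‖ ≤ ‖f‖ := by
  rw [D.Φ_σ]; exact norm_steklov_le hU s j f

lemma listProd_eq {r : ℕ} (J : Fin r → Fin n) (τ : Fin r → ℝ) :
    (List.ofFn fun i => U (J i) (τ i) - 1).prod = D.Φ (∏ i, (D.u (J i) (τ i) - 1)) := by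
  rw [← List.prod_ofFn, map_list_prod, List.map_ofFn]
  simp [Function.comp_def, D.Φ_u]

lemma norm_sub_one_le (j : Fin n) (t : ℝ) (f : E) : ‖D.Φ (D.u j t - 1) f‖ ≤ 2 * ‖f‖ := by
  rw [sub_one_apply]
  linarith [norm_sub_le (U j t f) f, hU.norm_le j t f]

lemma norm_prod_sub_one_le {r : ℕ} (J : Fin r → Fin n) (τ : Fin r → ℝ) (f : E) :
    ‖D.Φ (∏ i, (D.u (J i) (τ i) - 1)) f‖ ≤ 2 ^ r * ‖f‖ := by
  induction r with
  | zero => simp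
  | succ r ih =>
    rw [Fin.prod_univ_succ, mul_apply]
    refine (D.norm_sub_one_le _ _ _).trans ?_
    rw [pow_succ']
    nlinarith [ih (fun i => J i.succ) (fun i => τ i.succ)]

/-- The suprema in the mixed modulus are over bounded sets, so `sSup` does bound their elements. -/
lemma le_sSup {r : ℕ} (J : Fin r → Fin n) (f : E) (τ : Fin r → ℝ) (hτ : ∀ i, τ i ∈ Set.Icc 0 s) :
    ‖D.Φ (∏ i, (D.u (J i) (τ i) - 1)) f‖ ≤
      sSup ((fun τ : Fin r → ℝ => ‖((List.ofFn fun i => U (J i) (τ i) - 1).prod) f‖) ''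
        Set.univ.pi fun _ => Set.Icc 0 s) := by
  refine le_csSup ⟨2 ^ r * ‖f‖, ?_⟩ ⟨τ, fun i _ => hτ i, ?_⟩
  · rintro _ ⟨τ, -, rfl⟩
    simp only [D.listProd_eq]
    exact D.norm_prod_sub_one_le J τ f
  · simp only [D.listProd_eq]

/-- The bound `‖∏ (U_{j_i}(τ_i) - 1) f‖ ≤ s^r ‖Θ_L f‖` whenever `L` is any rearrangement of
`j_1, …, j_r`; the operator `B` makes the induction on `L` go through. -/
lemma norm_prod_le_of_isIterDeriv {L : List (Fin n)} {f g : E} (h : IsIterDeriv U L f g)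
    (P : List (Fin n × ℝ)) (hP : (P.map Prod.fst).Perm L) (hτ : ∀ q ∈ P, q.2 ∈ Set.Icc 0 s)
    (B : R) :
    ‖D.Φ (B * (P.map fun q => D.u q.1 q.2 - 1).prod) f‖ ≤ s ^ L.length * ‖D.Φ B g‖ := by
  induction L generalizing P B g with
  | nil =>
    obtain rfl : g = f := h
    obtain rfl : P = [] := by simpa using hP
    simp
  | cons j L ih =>
    obtain ⟨k, hk, hg⟩ := h
    obtain ⟨⟨j', τ⟩, hq, rfl⟩ := List.mem_map.1 (hP.mem_iff.2 List.mem_cons_self)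
    obtain ⟨P₁, P₂, rfl⟩ := List.append_of_mem hq
    have hP' : ((P₁ ++ P₂).map Prod.fst).Perm L := by
      have h1 := (List.perm_middle (a := (j', τ)) (l₁ := P₁) (l₂ := P₂)).map Prod.fst
      exact (h1.symm.trans hP).cons_inv
    have hτ0 := hτ _ hq
    have h2 := ih hk (P₁ ++ P₂) hP' (fun q hq' => hτ q (by
      simp only [List.mem_append, List.mem_cons] at hq' ⊢; tauto)) (B * (D.u j' τ - 1))
    have h3 : B * ((P₁ ++ (j', τ) :: P₂).map fun q => D.u q.1 q.2 - 1).prod =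
        B * (D.u j' τ - 1) * ((P₁ ++ P₂).map fun q => D.u q.1 q.2 - 1).prod := by
      simp only [List.map_append, List.map_cons, List.prod_append, List.prod_cons]
      ring
    rw [h3]
    refine h2.trans ?_
    rw [List.length_cons, pow_succ, mul_assoc]
    have hs : 0 ≤ s := hτ0.1.trans hτ0.2
    refine mul_le_mul_of_nonneg_left ?_ (pow_nonneg hs _)
    rw [mul_comm B, mul_apply, sub_one_apply]
    refine (norm_sub_le_of_genDeriv hU (genDeriv_map hg (D.Φ B) fun t => D.commute_u B j' t)
      hτ0.1).trans ?_
    exact mul_le_mul_of_nonneg_right hτ0.2 (norm_nonneg _)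

/-- A bound for all `∏ (U_{J i}(τ_i) - 1) f` with `τ_i ∈ [0, s]` passes to `∏ (1 - S_{J i}) f`:
replace one translation at a time by its average over `[0, s]`. -/
lemma norm_prod_one_sub_σ_le [CompleteSpace E] (hs : 0 < s) {r : ℕ} (J : Fin r → Fin n) (f : E)
    {M : ℝ} (hM : ∀ τ : Fin r → ℝ, (∀ i, τ i ∈ Set.Icc 0 s) →
      ‖D.Φ (∏ i, (D.u (J i) (τ i) - 1)) f‖ ≤ M) :
    ‖D.Φ (∏ i, (1 - D.σ (J i))) f‖ ≤ M := by
  induction r generalizing f with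
  | zero => simpa using hM 0 (fun i => i.elim0)
  | succ r ih =>
    rw [Fin.prod_univ_succ, mul_apply, one_sub_apply, D.Φ_σ]
    refine norm_steklov_sub_le hU hs _ _ fun τ hτ => ?_
    rw [← D.sub_one_apply, D.apply_comm]
    refine ih (fun i => J i.succ) _ fun τ' hτ' => ?_
    have := hM (Fin.cons τ τ') (Fin.cases hτ hτ')
    rwa [Fin.prod_univ_succ, mul_comm, mul_apply] at this

lemma norm_σ_pow_le (j : Fin n) (r : ℕ) (f : E) :
    ‖D.Φ (D.σ j ^ r) f‖ ≤ ‖f‖ ∧ ‖D.Φ (1 - D.σ j ^ r) f‖ ≤ r * ‖D.Φ (1 - D.σ j) f‖ := by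
  induction r with
  | zero => simp
  | succ r ih =>
    constructor
    · rw [pow_succ', mul_apply]
      exact (D.norm_σ_le _ _).trans ih.1
    · have : 1 - D.σ j ^ (r + 1) = (1 - D.σ j) + D.σ j * (1 - D.σ j ^ r) := by ring
      rw [this, _root_.map_add, _root_.add_apply, mul_apply]
      refine (norm_add_le _ _).trans ?_
      push_cast
      linarith [D.norm_σ_le j (D.Φ (1 - D.σ j ^ r) f), ih.2]

/-- Telescoping for a product of commuting contractions. -/
lemma norm_prod_σ_pow_le (a : Fin n → ℕ) (S : Finset (Fin n)) (f : E) :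
    ‖D.Φ (∏ j ∈ S, D.σ j ^ a j) f‖ ≤ ‖f‖ ∧
      ‖D.Φ (1 - ∏ j ∈ S, D.σ j ^ a j) f‖ ≤ ∑ j ∈ S, a j * ‖D.Φ (1 - D.σ j) f‖ := by
  induction S using Finset.induction_on with
  | empty => simp
  | insert j S hj ih =>
    rw [Finset.prod_insert hj, Finset.sum_insert hj]
    constructor
    · rw [mul_apply]
      exact (D.norm_σ_pow_le _ _ _).1.trans ih.1
    · have : 1 - D.σ j ^ a j * ∏ j ∈ S, D.σ j ^ a j =
        (1 - D.σ j ^ a j) + D.σ j ^ a j * (1 - ∏ j ∈ S, D.σ j ^ a j) := by ring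
      rw [this, _root_.map_add, _root_.add_apply, mul_apply]
      exact (norm_add_le _ _).trans (add_le_add (D.norm_σ_pow_le _ _ _).2
        ((D.norm_σ_pow_le _ _ _).1.trans ih.2))

/-- Iterates a bound by the first-order differences `1 - S_j` into one by their `m`-fold
products. -/
lemma norm_pow_le_sum {W : R} {C : ℝ} (hC : 0 ≤ C)
    (hW : ∀ f, ‖D.Φ W f‖ ≤ C * ∑ j, ‖D.Φ (1 - D.σ j) f‖) (m : ℕ) (f : E) :
    ‖D.Φ (W ^ m) f‖ ≤ C ^ m * ∑ J : Fin m → Fin n, ‖D.Φ (∏ i, (1 - D.σ (J i))) f‖ := by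
  induction m generalizing f with
  | zero => simp
  | succ m ih =>
    rw [pow_succ', mul_apply]
    refine (hW _).trans ?_
    rw [pow_succ', mul_assoc]
    refine mul_le_mul_of_nonneg_left ?_ hC
    rw [← (Fin.consEquiv fun _ => Fin n).sum_comp, Fintype.sum_prod_type, Finset.mul_sum]
    refine Finset.sum_le_sum fun j _ => ?_
    rw [D.apply_comm]
    refine (ih _).trans (le_of_eq ?_)
    congr 1
    refine Finset.sum_congr rfl fun J _ => ?_
    rw [← mul_apply, Fin.prod_univ_succ, mul_comm]
    simp [Fin.consEquiv]

/-- The product of Steklov averages along `L` is differentiable along `L`, and differentiation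
turns every average into a difference quotient. -/
lemma isIterDeriv_σ [CompleteSpace E] (L : List (Fin n)) (f : E) :
    IsIterDeriv U L (D.Φ (L.map D.σ).prod f)
      ((s⁻¹) ^ L.length • D.Φ (L.map fun j => D.u j s - 1).prod f) := by
  induction L generalizing f with
  | nil => simp [IsIterDeriv]
  | cons j L ih =>
    refine ⟨s⁻¹ ^ L.length • D.Φ (L.map fun j => D.u j s - 1).prod (D.Φ (D.σ j) f), ?_, ?_⟩
    · have := ih (D.Φ (D.σ j) f)
      rwa [D.apply_comm, ← mul_apply, ← List.prod_cons, ← List.map_cons] at this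
    · have h := genDeriv_steklov hU s j
        (s⁻¹ ^ L.length • D.Φ (L.map fun j => D.u j s - 1).prod f)
      have hsm : ∀ (A : E →L[ℂ] E) (c : ℝ) (x : E), A (c • x) = c • A x := fun A c x =>
        (A.restrictScalars ℝ).map_smul c x
      rw [← D.Φ_σ, hsm, D.apply_comm, ← D.sub_one_apply, hsm] at h
      rw [List.map_cons, List.prod_cons, List.length_cons, pow_succ', mul_smul, mul_apply]
      exact h

end CommModel

/-- A uniform bound for the operators `∑_{k<r} (1 - V)^k`, `V` a contraction. -/
lemma CommModel.norm_geom_le (D : CommModel hU s R) {V : R} (hV : ∀ f, ‖D.Φ V f‖ ≤ ‖f‖)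
    (r : ℕ) (f : E) : ‖D.Φ (∑ k ∈ Finset.range r, (1 - V) ^ k) f‖ ≤ 2 ^ r * ‖f‖ := by
  have hp : ∀ k, ‖D.Φ ((1 - V) ^ k) f‖ ≤ 2 ^ k * ‖f‖ := by
    intro k
    induction k with
    | zero => simp
    | succ k ih =>
      rw [pow_succ', D.mul_apply, D.one_sub_apply, pow_succ']
      refine (norm_sub_le _ _).trans ?_
      linarith [hV (D.Φ ((1 - V) ^ k) f)]
  induction r with
  | zero => simp
  | succ r ih =>
    rw [Finset.sum_range_succ, _root_.map_add, _root_.add_apply, pow_succ]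
    refine (norm_add_le _ _).trans ?_
    linarith [hp r]

end Estimates

/-! ### The two inequalities -/

section Main

universe v

variable {E : Type v} [NormedAddCommGroup E] [NormedSpace ℂ E] {n : ℕ}
  {U : Fin n → ℝ → E →L[ℂ] E}

lemma mixedMod_nonneg (r : ℕ) (s : ℝ) (f : E) : 0 ≤ mixedMod U r s f := by
  refine Finset.sum_nonneg fun J _ => Real.sSup_nonneg ?_
  rintro _ ⟨τ, -, rfl⟩
  exact norm_nonneg _

lemma norm_le_WNorm (r : ℕ) (f : E) : ‖f‖ ≤ WNorm U r f :=
  le_add_of_nonneg_right (Finset.sum_nonneg fun _ _ => norm_nonneg _)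

lemma bddBelow_Kfun (r : ℕ) {t : ℝ} (ht : 0 ≤ t) (f : E) :
    BddBelow {v | ∃ f₀ f₁ : E, f = f₀ + f₁ ∧ memW U r f₁ ∧ v = ‖f₀‖ + t * WNorm U r f₁} := by
  refine ⟨0, ?_⟩
  rintro _ ⟨f₀, f₁, -, -, rfl⟩
  have := (norm_nonneg f₁).trans (norm_le_WNorm (U := U) r f₁)
  positivity

lemma Kfun_le {r : ℕ} {t : ℝ} (ht : 0 ≤ t) {f f₀ f₁ : E} (h : f = f₀ + f₁) (h₁ : memW U r f₁) :
    Kfun U r t f ≤ ‖f₀‖ + t * WNorm U r f₁ :=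
  csInf_le (bddBelow_Kfun r ht f) ⟨f₀, f₁, h, h₁, rfl⟩

lemma isIterDeriv_zero (L : List (Fin n)) : IsIterDeriv U L 0 0 := by
  induction L with
  | nil => rfl
  | cons j L ih => exact ⟨0, ih, by simp [GenDeriv]⟩

lemma memW_zero (r : ℕ) : memW U r (0 : E) := fun _ _ => ⟨0, isIterDeriv_zero _⟩

lemma WNorm_zero (r : ℕ) : WNorm U r (0 : E) = 0 := by
  have : ∀ L, iterDerivVal U L (0 : E) = 0 := fun L =>
    (iterDerivVal_spec ⟨0, isIterDeriv_zero L⟩).unique (isIterDeriv_zero L)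
  simp [WNorm, this]

lemma Kfun_le_norm (r : ℕ) {t : ℝ} (ht : 0 ≤ t) (f : E) : Kfun U r t f ≤ ‖f‖ := by
  have := Kfun_le (U := U) ht (add_zero f).symm (memW_zero r)
  simpa [WNorm_zero] using this

lemma le_Kfun {r : ℕ} {t : ℝ} {f : E} {v : ℝ}
    (h : ∀ f₀ f₁ : E, f = f₀ + f₁ → memW U r f₁ → v ≤ ‖f₀‖ + t * WNorm U r f₁) :
    v ≤ Kfun U r t f := by
  refine le_csInf ⟨_, f, 0, (add_zero f).symm, memW_zero r, rfl⟩ ?_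
  rintro _ ⟨f₀, f₁, h0, h1, rfl⟩
  exact h f₀ f₁ h0 h1

variable [CompleteSpace E]

/-- Difference operators of total order `r` are controlled by the K-functional. -/
lemma mixedMod_le_Kfun (hU : CommContractionGroups U) {r : ℕ} (hr : r ≠ 0) (f : E) {s : ℝ}
    (hs : 0 ≤ s) :
    mixedMod U r s f ≤ (Fintype.card (Fin r → Fin n) * 2 ^ r) * Kfun U r (s ^ r) f := by
  obtain ⟨R, _, ⟨D⟩⟩ := exists_commModel hU s
  rw [mul_assoc, ← nsmul_eq_mul]
  refine Finset.sum_le_card_nsmul _ _ _ fun J _ => ?_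
  rw [← div_le_iff₀' (by positivity)]
  refine le_Kfun fun f₀ f₁ hf h₁ => ?_
  rw [div_le_iff₀' (by positivity)]
  refine csSup_le ⟨_, fun _ => 0, fun _ _ => ⟨le_rfl, hs⟩, rfl⟩ ?_
  rintro _ ⟨τ, hτ, rfl⟩
  simp only [D.listProd_eq]
  rw [hf, _root_.map_add]
  refine (norm_add_le _ _).trans ?_
  have h0 := D.norm_prod_sub_one_le J τ f₀
  -- On `f₁`, sort `J` into the list of the multi-index counting its values.
  set L := List.ofFn J with hL
  have hlen : ∑ j, L.count j = r := by
    rw [← length_multiIndexList, ← (perm_multiIndexList L).length_eq, hL, List.length_ofFn]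
  have hspec := iterDerivVal_spec (h₁ _ hlen)
  have h2 := D.norm_prod_le_of_isIterDeriv hspec (List.ofFn fun i => (J i, τ i))
    (by
      rw [List.map_ofFn]
      exact perm_multiIndexList L)
    (by
      intro q hq
      obtain ⟨i, rfl⟩ := (List.mem_ofFn' _ _).1 hq
      exact hτ i trivial) 1
  rw [one_mul, List.map_ofFn, List.prod_ofFn, length_multiIndexList, hlen] at h2
  simp only [Function.comp_def, _root_.map_one, one_apply_eq_self] at h2
  have h3 : ‖iterDerivVal U (multiIndexList fun j => L.count j) f₁‖ ≤ WNorm U r f₁ := by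
    refine le_add_of_nonneg_of_le (norm_nonneg _) (Finset.single_le_sum
      (f := fun a => ‖iterDerivVal U (multiIndexList a) f₁‖) (fun _ _ => norm_nonneg _) ?_)
    simp only [Finset.mem_filter, Fintype.mem_piFinset, Finset.mem_range]
    refine ⟨fun j => Nat.lt_succ_of_le ?_, hlen, hr⟩
    rw [← hlen]
    exact Finset.single_le_sum (f := fun j => L.count j) (fun _ _ => Nat.zero_le _)
      (Finset.mem_univ j)
  have h4 : s ^ r * ‖iterDerivVal U (multiIndexList fun j => L.count j) f₁‖ ≤
      s ^ r * WNorm U r f₁ := mul_le_mul_of_nonneg_left h3 (pow_nonneg hs _)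
  have h5 : (1 : ℝ) ≤ 2 ^ r := one_le_pow₀ one_le_two
  have h6 : 0 ≤ s ^ r * WNorm U r f₁ :=
    mul_nonneg (pow_nonneg hs _) ((norm_nonneg _).trans (norm_le_WNorm r f₁))
  nlinarith

/-- For `0 < s`, the approximant `A f`, `A = 1 - (1 - V)^r` with `V = ∏_j S_j^r`, is a competitor
in the K-functional. -/
lemma Kfun_le_mixedMod (hU : CommContractionGroups U) (r : ℕ) (f : E) {s : ℝ} (hs : 0 < s) :
    Kfun U r (s ^ r) f ≤ (r ^ r + 2 ^ r * ((r + 1) ^ n + 1)) * (mixedMod U r s f + s ^ r * ‖f‖) := by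
  obtain ⟨R, _, ⟨D⟩⟩ := exists_commModel hU s
  set V : R := ∏ j, D.σ j ^ r with hV
  have hVc : ∀ g, ‖D.Φ V g‖ ≤ ‖g‖ := fun g => (D.norm_prod_σ_pow_le (fun _ => r) _ g).1
  set Q : R := ∑ k ∈ Finset.range r, (1 - V) ^ k with hQ
  have hA : 1 - V * Q = (1 - V) ^ r := by
    have := mul_neg_geom_sum (1 - V) r
    rw [← hQ] at this
    linear_combination -this
  have hM0 := mixedMod_nonneg (U := U) r s f
  have hterm : ∀ J : Fin r → Fin n, ∀ τ : Fin r → ℝ, (∀ i, τ i ∈ Set.Icc 0 s) →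
      ‖D.Φ (∏ i, (D.u (J i) (τ i) - 1)) f‖ ≤ mixedMod U r s f := by
    intro J τ hτ
    refine (D.le_sSup J f τ hτ).trans (Finset.single_le_sum (f := fun J : Fin r → Fin n =>
      sSup ((fun τ : Fin r → ℝ => ‖((List.ofFn fun i => U (J i) (τ i) - 1).prod) f‖) ''
        Set.univ.pi fun _ => Set.Icc 0 s)) (fun J _ => Real.sSup_nonneg ?_) (Finset.mem_univ J))
    rintro _ ⟨τ, -, rfl⟩
    exact norm_nonneg _
  have h0 : ‖D.Φ ((1 - V) ^ r) f‖ ≤ r ^ r * mixedMod U r s f := by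
    refine (D.norm_pow_le_sum (W := 1 - V) (C := r) (Nat.cast_nonneg r) (fun g => ?_) r f).trans ?_
    · rw [Finset.mul_sum]
      exact (D.norm_prod_σ_pow_le (fun _ => r) _ g).2
    · refine mul_le_mul_of_nonneg_left (Finset.sum_le_sum fun J _ => ?_) (by positivity)
      exact D.norm_prod_one_sub_σ_le hs J f fun τ hτ => D.le_sSup J f τ hτ
  have hder : ∀ a : Fin n → ℕ, ∑ i, a i = r → ∃ g, IsIterDeriv U (multiIndexList a)
      (D.Φ (V * Q) f) g ∧ s ^ r * ‖g‖ ≤ 2 ^ r * mixedMod U r s f := by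
    intro a ha
    have hle : ∀ j, a j ≤ r := fun j => ha ▸
      Finset.single_le_sum (fun _ _ => Nat.zero_le _) (Finset.mem_univ j)
    have hfac : V * Q = ((multiIndexList a).map D.σ).prod * (Q * ∏ j, D.σ j ^ (r - a j)) := by
      rw [prod_map_multiIndexList, mul_comm Q, ← mul_assoc, ← Finset.prod_mul_distrib]
      simp only [← pow_add, Nat.add_sub_cancel' (hle _)]
      rfl
    have hlen : (multiIndexList a).length = r := by rw [length_multiIndexList, ha]
    obtain ⟨J, hJ⟩ : ∃ J : Fin r → Fin n, List.ofFn J = multiIndexList a := by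
      revert hlen
      generalize multiIndexList a = L
      rintro rfl
      exact ⟨L.get, List.ofFn_get L⟩
    have hd := D.isIterDeriv_σ (multiIndexList a) (D.Φ (Q * ∏ j, D.σ j ^ (r - a j)) f)
    rw [← D.mul_apply, ← hfac] at hd
    refine ⟨_, hd, ?_⟩
    rw [hlen, norm_smul, norm_pow, norm_inv, Real.norm_eq_abs, abs_of_pos hs, ← mul_assoc,
      ← mul_pow, mul_inv_cancel₀ hs.ne', one_pow, one_mul, D.apply_comm, D.mul_apply]
    refine (D.norm_geom_le hVc r _).trans (mul_le_mul_of_nonneg_left ?_ (by positivity))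
    refine (D.norm_prod_σ_pow_le (fun j => r - a j) _ _).1.trans ?_
    rw [← hJ, List.map_ofFn, List.prod_ofFn]
    exact hterm J (fun _ => s) fun _ => ⟨hs.le, le_rfl⟩
  have hmem : memW U r (D.Φ (V * Q) f) := fun a ha => (hder a ha).imp fun g hg => hg.1
  have hsplit : f = D.Φ ((1 - V) ^ r) f + D.Φ (V * Q) f := by
    rw [← hA, D.one_sub_apply, sub_add_cancel]
  refine (Kfun_le (pow_nonneg hs.le r) hsplit hmem).trans ?_
  have hnorm : ‖D.Φ (V * Q) f‖ ≤ 2 ^ r * ‖f‖ := by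
    rw [D.mul_apply]
    exact (hVc _).trans (D.norm_geom_le hVc r f)
  have hW : s ^ r * WNorm U r (D.Φ (V * Q) f) ≤
      s ^ r * (2 ^ r * ‖f‖) + (r + 1) ^ n * (2 ^ r * mixedMod U r s f) := by
    rw [WNorm, mul_add]
    refine add_le_add (mul_le_mul_of_nonneg_left hnorm (pow_nonneg hs.le r)) ?_
    rw [Finset.mul_sum]
    refine (Finset.sum_le_card_nsmul _ _ (2 ^ r * mixedMod U r s f) fun a ha => ?_).trans ?_
    · obtain ⟨g, hg, hb⟩ := hder a (Finset.mem_filter.1 ha).2.1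
      rwa [(iterDerivVal_spec ⟨g, hg⟩).unique hg]
    · rw [nsmul_eq_mul]
      refine mul_le_mul_of_nonneg_right ?_ (by positivity)
      refine (Nat.cast_le.2 (Finset.card_filter_le _ _)).trans ?_
      simp [Fintype.card_piFinset]
  have hsf : 0 ≤ s ^ r * ‖f‖ := by positivity
  have e1 : 0 ≤ (r : ℝ) ^ r * (s ^ r * ‖f‖) := by positivity
  have e2 : 0 ≤ (2 : ℝ) ^ r * (r + 1) ^ n * (s ^ r * ‖f‖) := by positivity
  have e3 : 0 ≤ (2 : ℝ) ^ r * mixedMod U r s f := by positivity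
  linarith

/-- For `r ≥ 1`, strong continuity makes the mixed modulus vanish as `s → 0+`. -/
lemma tendsto_mixedMod (hU : CommContractionGroups U) (r : ℕ) (f : E) :
    Tendsto (fun s => mixedMod U (r + 1) s f) (𝓝[>] 0) (𝓝 0) := by
  obtain ⟨R, _, ⟨D⟩⟩ := exists_commModel hU 1
  rw [Metric.tendsto_nhds]
  intro ε hε
  set N : ℝ := Fintype.card (Fin (r + 1) → Fin n) * 2 ^ r with hN
  have hN0 : 0 ≤ N := by positivity
  have hδ : 0 < ε / (N + 1) := by positivity
  have hev : ∀ᶠ τ : ℝ in 𝓝 0, ∀ j, ‖U j τ f - f‖ < ε / (N + 1) := by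
    refine eventually_all.2 fun j => ?_
    have h := ((hU.cont j f).sub continuous_const).norm.tendsto' (y := 0) 0
      (by simp [hU.map_zero] : ‖U j 0 f - f‖ = 0)
    exact h.eventually_lt_const hδ
  obtain ⟨δ, hδ0, hδ'⟩ := Metric.eventually_nhds_iff.1 hev
  filter_upwards [Ioo_mem_nhdsGT hδ0] with s hs
  rw [dist_zero_right, Real.norm_eq_abs, abs_of_nonneg (mixedMod_nonneg _ _ _)]
  have hb : mixedMod U (r + 1) s f ≤ N * (ε / (N + 1)) := by
    rw [hN, mul_assoc, ← nsmul_eq_mul]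
    refine Finset.sum_le_card_nsmul _ _ _ fun J _ => ?_
    refine csSup_le ⟨_, fun _ => 0, fun _ _ => ⟨le_rfl, hs.1.le⟩, rfl⟩ ?_
    rintro _ ⟨τ, hτ, rfl⟩
    simp only [D.listProd_eq]
    rw [Fin.prod_univ_succ, mul_comm, D.mul_apply]
    refine (D.norm_prod_sub_one_le _ _ _).trans (mul_le_mul_of_nonneg_left ?_ (by positivity))
    rw [D.sub_one_apply]
    have h0 := hτ 0 trivial
    refine (hδ' ?_ _).le
    rw [dist_zero_right, Real.norm_eq_abs, abs_of_nonneg h0.1]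
    exact h0.2.trans_lt hs.2
  refine hb.trans_lt ?_
  rw [mul_div_assoc', div_lt_iff₀ (by positivity)]
  nlinarith

/-- For `r ≥ 1` the space `W^r` is dense, in the form `K(0, f) ≤ 0`. -/
lemma Kfun_zero_le (hU : CommContractionGroups U) (r : ℕ) (f : E) : Kfun U (r + 1) 0 f ≤ 0 := by
  have hs : Tendsto (fun s : ℝ => s ^ (r + 1) * ‖f‖) (𝓝[>] 0) (𝓝 0) := by
    refine tendsto_nhdsWithin_of_tendsto_nhds ?_
    exact Continuous.tendsto' (by fun_prop) _ _ (by simp)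
  have hlim := ((tendsto_mixedMod hU r f).add hs).const_mul
    (((r + 1 : ℕ) : ℝ) ^ (r + 1) + 2 ^ (r + 1) * (((r + 1 : ℕ) : ℝ) + 1) ^ n + 2 ^ (r + 1))
  rw [add_zero, mul_zero] at hlim
  refine ge_of_tendsto hlim ?_
  filter_upwards [self_mem_nhdsWithin] with s hs0
  have hs0' : (0 : ℝ) < s := hs0
  refine le_trans (le_Kfun fun f₀ f₁ h h₁ => ?_) ((Kfun_le_mixedMod hU (r + 1) f hs0').trans
    (le_of_eq (by ring)))
  refine (Kfun_le le_rfl h h₁).trans ?_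
  have := (norm_nonneg f₁).trans (norm_le_WNorm (U := U) (r + 1) f₁)
  rw [zero_mul, add_zero]
  exact le_add_of_nonneg_right (by positivity)

/-- The equivalence for any finite family of commuting, strongly continuous one-parameter groups
of contractions on a Banach space. -/
theorem CommContractionGroups.equivalence (hU : CommContractionGroups U) (r : ℕ) :
    ∃ c C : ℝ, 0 < c ∧ 0 < C ∧ ∀ (f : E) (s : ℝ), 0 ≤ s →
      c * mixedMod U r s f ≤ Kfun U r (s ^ r) f ∧
      Kfun U r (s ^ r) f ≤ C * (mixedMod U r s f + min (s ^ r) 1 * ‖f‖) := by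
  rcases r with _ | r
  · refine ⟨1, 1, one_pos, one_pos, fun f s _ => ?_⟩
    have hm : mixedMod U 0 s f = ‖f‖ := by simp [mixedMod]
    rw [hm, pow_zero, one_mul, one_mul, min_self, one_mul]
    constructor
    · refine le_Kfun fun f₀ f₁ h _ => ?_
      rw [h, one_mul]
      exact (norm_add_le _ _).trans (add_le_add le_rfl (norm_le_WNorm 0 f₁))
    · exact (Kfun_le_norm 0 zero_le_one f).trans (le_add_of_nonneg_right (norm_nonneg f))
  · set N : ℝ := Fintype.card (Fin (r + 1) → Fin n) * 2 ^ (r + 1) with hN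
    set C₀ : ℝ := ((r + 1 : ℕ) : ℝ) ^ (r + 1) +
      2 ^ (r + 1) * ((((r + 1 : ℕ) : ℝ) + 1) ^ n + 1) with hC₀
    have hN0 : 0 ≤ N := by positivity
    have hC0 : 0 ≤ C₀ := by positivity
    refine ⟨(N + 1)⁻¹, C₀ + 1, by positivity, by positivity, fun f s hs => ⟨?_, ?_⟩⟩
    · rw [inv_mul_le_iff₀ (by positivity)]
      have hK : 0 ≤ Kfun U (r + 1) (s ^ (r + 1)) f := le_Kfun fun f₀ f₁ _ _ => by
        have := (norm_nonneg f₁).trans (norm_le_WNorm (U := U) (r + 1) f₁)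
        positivity
      have h := mixedMod_le_Kfun hU (r := r + 1) r.succ_ne_zero f hs
      rw [← hN] at h
      linarith
    · have hM := mixedMod_nonneg (U := U) (r + 1) s f
      rcases hs.eq_or_lt with rfl | hs0
      · rw [zero_pow r.succ_ne_zero]
        refine (Kfun_zero_le hU r f).trans ?_
        positivity
      rcases le_total s 1 with h1 | h1
      · rw [min_eq_left (pow_le_one₀ hs h1)]
        refine (Kfun_le_mixedMod hU (r + 1) f hs0).trans ?_
        refine mul_le_mul_of_nonneg_right (le_add_of_nonneg_right zero_le_one) (by positivity)
      · rw [min_eq_right (one_le_pow₀ h1), one_mul]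
        refine (Kfun_le_norm _ (pow_nonneg hs _) f).trans ?_
        have := norm_nonneg f
        nlinarith [mul_nonneg hC0 hM, mul_nonneg hC0 this]

end Main

/-! ### The Mellin translation groups -/

/-- Change of variables `x_i = exp y_i`: the Jacobian `∏ exp y_i` cancels the density. -/
lemma measurePreserving_exp (n : ℕ) :
    MeasurePreserving (fun (y : Fin n → ℝ) i => Real.exp (y i)) volume (mellinMeasure n) := by
  set F : (Fin n → ℝ) → (Fin n → ℝ) := fun y i => Real.exp (y i) with hF
  have hFm : Measurable F := by fun_prop
  refine ⟨hFm, ?_⟩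
  ext A hA
  have hpos : MeasurableSet {x : Fin n → ℝ | ∀ i, 0 < x i} := by
    simp only [Set.ofPred_forall]
    exact MeasurableSet.iInter fun i => measurableSet_lt measurable_const (measurable_pi_apply i)
  have himg : F '' (F ⁻¹' A) = A ∩ {x | ∀ i, 0 < x i} := by
    rw [Set.image_preimage_eq_inter_range]
    congr 1
    ext x
    constructor
    · rintro ⟨y, rfl⟩ i
      exact Real.exp_pos _
    · intro hx
      exact ⟨fun i => Real.log (x i), funext fun i => Real.exp_log (hx i)⟩
  have hinj : Function.Injective F := fun y z h => funext fun i =>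
    Real.exp_injective (congrFun h i)
  let F' : (Fin n → ℝ) → ((Fin n → ℝ) →L[ℝ] (Fin n → ℝ)) := fun y =>
    ContinuousLinearMap.pi fun i => Real.exp (y i) • ContinuousLinearMap.proj i
  have hd : ∀ y, HasFDerivAt F (F' y) y := fun y =>
    hasFDerivAt_pi.2 fun i => (hasFDerivAt_apply i y).exp
  have hdet : ∀ y, (F' y).det = ∏ i, Real.exp (y i) := by
    intro y
    have : ((F' y : (Fin n → ℝ) →L[ℝ] (Fin n → ℝ)) : (Fin n → ℝ) →ₗ[ℝ] (Fin n → ℝ)) =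
        Matrix.toLin' (Matrix.diagonal fun i => Real.exp (y i)) := by
      refine LinearMap.ext fun v => funext fun i => ?_
      simp [F', Matrix.mulVec_diagonal]
    rw [ContinuousLinearMap.det, this, LinearMap.det_toLin', Matrix.det_diagonal]
  rw [Measure.map_apply hFm hA, mellinMeasure, withDensity_apply _ hA, Measure.restrict_restrict hA,
    ← himg, lintegral_image_eq_lintegral_abs_det_fderiv_mul volume (hFm hA)
      (fun y _ => (hd y).hasFDerivWithinAt) hinj.injOn]
  have : ∀ y, ENNReal.ofReal |(F' y).det| * ∏ i, ENNReal.ofReal (F y i)⁻¹ = 1 := by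
    intro y
    rw [hdet, abs_of_pos (Finset.prod_pos fun i _ => Real.exp_pos _),
      ENNReal.ofReal_prod_of_nonneg fun i _ => (Real.exp_pos _).le, ← Finset.prod_mul_distrib]
    refine Finset.prod_eq_one fun i _ => ?_
    rw [← ENNReal.ofReal_mul (Real.exp_pos _).le, mul_inv_cancel₀ (Real.exp_pos _).ne',
      ENNReal.ofReal_one]
  simp [this]

lemma commContractionGroups_of_isMellinTranslation {n : ℕ} (p : ℝ≥0∞) [Fact (1 ≤ p)] (hp : p ≠ ∞)
    (U : Fin n → ℝ → (Lp ℂ p (mellinMeasure n) →L[ℂ] Lp ℂ p (mellinMeasure n)))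
    (hU : IsMellinTranslation p U) : CommContractionGroups U := by
  have hE := measurePreserving_exp n
  let ι : Lp ℂ p (mellinMeasure n) →ₗᵢ[ℂ] Lp ℂ p (volume : Measure (Fin n → ℝ)) :=
    Lp.compMeasurePreservingₗᵢ ℂ _ hE
  have hT : ∀ v : Fin n → ℝ, MeasurePreserving (fun y => y + v) (volume : Measure (Fin n → ℝ))
    volume := fun v => measurePreserving_add_right volume v
  -- Under `ι`, the dilation by `e^t` in coordinate `j` is the translation by `t e_j`.
  have key : ∀ j t f, ι (U j t f) = Lp.compMeasurePreserving _ (hT (Pi.single j t)) (ι f) := by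
    intro j t f
    refine Lp.ext ?_
    have h1 := Lp.coeFn_compMeasurePreserving (U j t f) hE
    have h2 := hE.quasiMeasurePreserving.ae_eq_comp (hU j t f)
    have h3 := Lp.coeFn_compMeasurePreserving (ι f) (hT (Pi.single j t))
    have h4 := (hT (Pi.single j t)).quasiMeasurePreserving.ae_eq_comp
      (Lp.coeFn_compMeasurePreserving f hE)
    refine (h1.trans h2).trans (EventuallyEq.trans ?_ (h3.trans h4).symm)
    refine Eventually.of_forall fun y => ?_
    simp only [Function.comp_apply]
    congr 1
    funext i
    rcases eq_or_ne i j with rfl | hij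
    · simp [mellinDilate, Real.exp_add, mul_comm]
    · simp [mellinDilate, hij]
  have hcomp : ∀ v w (g : Lp ℂ p (volume : Measure (Fin n → ℝ))),
      Lp.compMeasurePreserving _ (hT v) (Lp.compMeasurePreserving _ (hT w) g) =
        Lp.compMeasurePreserving _ (hT (v + w)) g := by
    intro v w g
    refine Lp.ext ?_
    have h1 := Lp.coeFn_compMeasurePreserving (Lp.compMeasurePreserving _ (hT w) g) (hT v)
    have h2 := (hT v).quasiMeasurePreserving.ae_eq_comp (Lp.coeFn_compMeasurePreserving g (hT w))
    have h3 := Lp.coeFn_compMeasurePreserving g (hT (v + w))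
    refine (h1.trans h2).trans (EventuallyEq.trans ?_ h3.symm)
    refine Eventually.of_forall fun y => ?_
    simp only [Function.comp_apply, add_assoc]
  constructor
  · intro j
    ext1 f
    apply ι.injective
    rw [key]
    refine Lp.ext ((Lp.coeFn_compMeasurePreserving (ι f) (hT (Pi.single j 0))).trans ?_)
    refine Eventually.of_forall fun y => ?_
    simp
  · intro j s t
    ext1 f
    apply ι.injective
    rw [mul_apply_eq_comp, key, key, key, hcomp]
    simp only [Pi.single_add]
  · intro i j s t
    ext1 f
    apply ι.injective
    simp only [mul_apply_eq_comp]
    rw [key, key, key, key, hcomp,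
      hcomp]
    simp only [add_comm]
  · intro j t f
    rw [← ι.norm_map, key, Lp.norm_compMeasurePreserving, ι.norm_map]
  · intro j f
    rw [ι.isometry.isEmbedding.continuous_iff]
    have hc : Continuous fun t : ℝ => (⟨fun y => y + Pi.single j t, by fun_prop⟩ :
        C(Fin n → ℝ, Fin n → ℝ)) := by
      refine ContinuousMap.continuous_of_continuous_uncurry _ ?_
      simp only [Function.uncurry_def, ContinuousMap.coe_mk]
      exact continuous_snd.add ((continuous_single j).comp continuous_fst)
    have hm : ∀ t : ℝ, MeasurePreserving (⟨fun y => y + Pi.single j t, by fun_prop⟩ :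
        C(Fin n → ℝ, Fin n → ℝ)) volume volume := fun t => hT (Pi.single j t)
    have := Continuous.compMeasurePreservingLp (continuous_const (y := ι f)) hc hm hp
    exact this.congr fun t => (key j t f).symm

/-- Equivalence of Peetre's K-functional for the pair `(X^p, W^r_p)` and the mixed
modulus of continuity: there are `c, C > 0` with
`c Ω^r_p(s,f) ≤ K(s^r, f, X^p, W^r_p) ≤ C (Ω^r_p(s,f) + min(s^r,1) ‖f‖)`
for all `f ∈ X^p` and `s ≥ 0`. -/
theorem k_functional_modulus_equivalence {n : ℕ} (p : ℝ≥0∞) [Fact (1 ≤ p)] (hp : p ≠ ∞)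
    (U : Fin n → ℝ → (Lp ℂ p (mellinMeasure n) →L[ℂ] Lp ℂ p (mellinMeasure n)))
    (hU : IsMellinTranslation p U)
    (r : ℕ) :
    ∃ c C : ℝ, 0 < c ∧ 0 < C ∧ ∀ (f : Lp ℂ p (mellinMeasure n)) (s : ℝ), 0 ≤ s →
      c * mixedMod U r s f ≤ Kfun U r (s ^ r) f ∧
      Kfun U r (s ^ r) f ≤ C * (mixedMod U r s f + min (s ^ r) 1 * ‖f‖) := by
  exact (commContractionGroups_of_isMellinTranslation p hp U hU).equivalence r
end
end
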